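/- Let V be a finite set and f : 2^V → ℝ normalized, monotone and submodular with curvature bound k_f ∈ [0,1] (f(V) − f(V \ {v}) ≥ (1 − k_f)·f({v}) for every v ∈ V). Then for all Y, Z ⊆ V, f(Z ∪ Y) − f(Z) + Σ_{j ∈ Y ∩ Z} ( f(Z ∪ Y) − f((Z ∪ Y) \ {j}) ) ≥ (1 − k_f) · f(Y). -/

import Mathlib

/-!
For a submodular `f` the loss `f S - f (S \ {j})` decreases as `S` grows, and removing a set from
`S` costs at least the sum of the losses of its elements. Removing `Y \ Z` from `Z ∪ Y` leaves `Z`,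
so the left-hand side of the inequality is at least the sum over all `j ∈ Y` of the losses from
`Z ∪ Y`. Each of these is at least the loss from the ground set, which the curvature bound compares
with `f {j}`, and subadditivity gives `f Y ≤ ∑ j ∈ Y, f {j}`.
-/

/-- Submodularity of a function on a lattice; on `Finset V`, where `⊔` and `⊓` are `∪` and `∩`,
these are the submodular set functions. -/
def IsSubmodular {α M : Type*} [Lattice α] [Add M] [LE M] (f : α → M) : Prop :=
  ∀ a b, f (a ⊔ b) + f (a ⊓ b) ≤ f a + f b

namespace IsSubmodular

variable {M : Type*} [AddCommGroup M] [Preorder M] [IsOrderedAddMonoid M]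

theorem sub_sdiff_le_sub_sdiff {α : Type*} [GeneralizedBooleanAlgebra α] {f : α → M}
    (hf : IsSubmodular f) {a s t : α} (has : a ≤ s) (hst : s ≤ t) :
    f t - f (t \ a) ≤ f s - f (s \ a) := by
  have hsup : s ⊔ t \ a = t :=
    le_antisymm (sup_le hst sdiff_le) (le_sup_sdiff.trans (sup_le_sup_right has _))
  have hinf : s ⊓ t \ a = s \ a := by rw [← inf_sdiff_assoc, inf_eq_left.2 hst]
  have h := hf s (t \ a)
  rw [hsup, hinf] at h
  rwa [sub_le_sub_iff]

variable {V : Type*} [DecidableEq V] {f : Finset V → M}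

theorem sum_sub_sdiff_singleton_le (hf : IsSubmodular f) {S T : Finset V} (hTS : T ⊆ S) :
    ∑ j ∈ T, (f S - f (S \ {j})) ≤ f S - f (S \ T) := by
  induction T using Finset.induction_on with
  | empty => simp
  | insert a T ha ih =>
    obtain ⟨haS, hTS⟩ := Finset.insert_subset_iff.1 hTS
    have haST : {a} ⊆ S \ T := by simp [haS, ha]
    have hsdiff : (S \ T) \ {a} = S \ insert a T := by
      rw [sdiff_sdiff_left, Finset.sup_eq_union, Finset.union_comm, Finset.insert_eq]
    calc ∑ j ∈ insert a T, (f S - f (S \ {j}))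
        = (f S - f (S \ {a})) + ∑ j ∈ T, (f S - f (S \ {j})) := Finset.sum_insert ha
      _ ≤ (f (S \ T) - f ((S \ T) \ {a})) + (f S - f (S \ T)) :=
        add_le_add (hf.sub_sdiff_le_sub_sdiff haST Finset.sdiff_subset) (ih hTS)
      _ = f S - f (S \ insert a T) := by rw [hsdiff]; abel

theorem sum_sub_sdiff_singleton_le_union_sub_add_sum (hf : IsSubmodular f) (Y Z : Finset V) :
    ∑ j ∈ Y, (f (Z ∪ Y) - f ((Z ∪ Y) \ {j})) ≤
      f (Z ∪ Y) - f Z + ∑ j ∈ Y ∩ Z, (f (Z ∪ Y) - f ((Z ∪ Y) \ {j})) := by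
  have hsdiff : (Z ∪ Y) \ (Y \ Z) = Z := by grind
  have hnew : ∑ j ∈ Y \ Z, (f (Z ∪ Y) - f ((Z ∪ Y) \ {j})) ≤ f (Z ∪ Y) - f Z := by
    simpa only [hsdiff] using hf.sum_sub_sdiff_singleton_le
      (Finset.sdiff_subset.trans Finset.subset_union_right : Y \ Z ⊆ Z ∪ Y)
  rw [← Finset.sum_inter_add_sum_sdiff Y Z, add_comm]
  gcongr

theorem union_sub_le_sum_insert_sub (hf : IsSubmodular f) (S T : Finset V) :
    f (S ∪ T) - f S ≤ ∑ j ∈ T, (f (insert j S) - f S) := by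
  induction T using Finset.induction_on with
  | empty => simp
  | insert a T ha ih =>
    have hunion : insert a S ∪ (S ∪ T) = S ∪ insert a T := by grind
    have hinter : insert a S ∩ (S ∪ T) = S := by grind
    have hstep : f (S ∪ insert a T) + f S ≤ f (insert a S) + f (S ∪ T) := by
      simpa only [Finset.sup_eq_union, Finset.inf_eq_inter, hunion, hinter]
        using hf (insert a S) (S ∪ T)
    calc f (S ∪ insert a T) - f S
        ≤ f (insert a S) - f S + (f (S ∪ T) - f S) := by
          rw [← add_sub_assoc, sub_add_eq_add_sub]
          exact sub_le_sub_right (le_sub_iff_add_le.2 hstep) _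
      _ ≤ f (insert a S) - f S + ∑ j ∈ T, (f (insert j S) - f S) := by gcongr
      _ = ∑ j ∈ insert a T, (f (insert j S) - f S) := by rw [Finset.sum_insert ha]

theorem le_sum_singleton (hf : IsSubmodular f) (hf0 : f ∅ = 0) (T : Finset V) :
    f T ≤ ∑ j ∈ T, f {j} := by
  simpa [hf0] using hf.union_sub_le_sum_insert_sub ∅ T

end IsSubmodular

theorem curvature_union_inequality_general {V R : Type*} [DecidableEq V]
    [Ring R] [PartialOrder R] [IsOrderedRing R] {f : Finset V → R} (hf : IsSubmodular f)
    (hf0 : f ∅ = 0) {k : R} (hk : k ≤ 1) {E : Finset V}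
    (hcurv : ∀ v ∈ E, (1 - k) * f {v} ≤ f E - f (E \ {v}))
    {Y Z : Finset V} (hY : Y ⊆ E) (hZ : Z ⊆ E) :
    (1 - k) * f Y ≤
      f (Z ∪ Y) - f Z + ∑ j ∈ Y ∩ Z, (f (Z ∪ Y) - f ((Z ∪ Y) \ {j})) := by
  have hloss : ∀ j ∈ Y, f E - f (E \ {j}) ≤ f (Z ∪ Y) - f ((Z ∪ Y) \ {j}) := fun j hj =>
    hf.sub_sdiff_le_sub_sdiff
      (Finset.singleton_subset_iff.2 (Finset.mem_union_right Z hj)) (Finset.union_subset hZ hY)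
  calc (1 - k) * f Y
      ≤ (1 - k) * ∑ j ∈ Y, f {j} :=
        mul_le_mul_of_nonneg_left (hf.le_sum_singleton hf0 Y) (sub_nonneg.2 hk)
    _ = ∑ j ∈ Y, (1 - k) * f {j} := Finset.mul_sum _ _ _
    _ ≤ ∑ j ∈ Y, (f E - f (E \ {j})) := Finset.sum_le_sum fun j hj => hcurv j (hY hj)
    _ ≤ ∑ j ∈ Y, (f (Z ∪ Y) - f ((Z ∪ Y) \ {j})) := Finset.sum_le_sum hloss
    _ ≤ f (Z ∪ Y) - f Z + ∑ j ∈ Y ∩ Z, (f (Z ∪ Y) - f ((Z ∪ Y) \ {j})) :=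
        hf.sum_sub_sdiff_singleton_le_union_sub_add_sum Y Z

/-- Curvature inequality
`f(Z∪Y) - f(Z) + Σ_{j ∈ Y∩Z} (f(Z∪Y) - f((Z∪Y)\{j})) ≥ (1 - k_f)·f(Y)`. -/
theorem curvature_union_inequality
    {V : Type*} [Fintype V] [DecidableEq V]
    (f : Finset V → ℝ)
    (hf0 : f ∅ = 0)
    (hfmono : ∀ A B : Finset V, A ⊆ B → f A ≤ f B)
    (hfsub : ∀ A B : Finset V, f A + f B ≥ f (A ∪ B) + f (A ∩ B))
    (kf : ℝ) (hkf0 : 0 ≤ kf) (hkf1 : kf ≤ 1)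
    (hcurv : ∀ v : V, f Finset.univ - f (Finset.univ \ {v}) ≥ (1 - kf) * f {v}) :
    ∀ Y Z : Finset V,
      f (Z ∪ Y) - f Z + ∑ j ∈ Y ∩ Z, (f (Z ∪ Y) - f ((Z ∪ Y) \ {j})) ≥
        (1 - kf) * f Y := by
  intro Y Z
  exact curvature_union_inequality_general hfsub hf0 hkf1 (fun v _ => hcurv v)
    Y.subset_univ Z.subset_univ
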